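/- Let u(z) := Im ψ(z,0). Then the third Wirtinger derivatives of u at 0 satisfy: ∂^3u/∂z̄_s∂z_j∂z_t(0) = ∂^3φ/∂z̄_s∂z_j∂z_t(0) if q+1 ≤ j,t,s ≤ n; ∂^3u/∂z̄_s∂z_j∂z_t(0) = [|λ_s|/(|λ_s|+|λ_t|)] ∂^3φ/∂z̄_s∂z_j∂z_t(0) if q+1 ≤ j,s ≤ n and 1 ≤ t ≤ q; ∂^3u/∂z̄_s∂z_j∂z_t(0) = [1/(|λ_j|+|λ_t|+|λ_s|)](|λ_s| − |λ_j||λ_t|/(|λ_j|+|λ_s|) − |λ_j||λ_t|/(|λ_s|+|λ_t|)) ∂^3φ/∂z̄_s∂z_j∂z_t(0) if q+1 ≤ s ≤ n and 1 ≤ j,t ≤ q; ∂^3u/∂z̄_s∂z_j∂z_t(0) = −∂^3φ/∂z̄_s∂z_j∂z_t(0) if 1 ≤ j,t,s ≤ q; ∂^3u/∂z̄_s∂z_j∂z_t(0) = −[|λ_s|/(|λ_j|+|λ_s|)] ∂^3φ/∂z̄_s∂z_j∂z_t(0) if 1 ≤ s,t ≤ q and q+1 ≤ j ≤ n; ∂^3u/∂z̄_s∂z_j∂z_t(0)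 = [1/(|λ_j|+|λ_t|+|λ_s|)](−|λ_s| + |λ_t||λ_j|/(|λ_j|+|λ_s|) + |λ_t||λ_j|/(|λ_s|+|λ_t|)) ∂^3φ/∂z̄_s∂z_j∂z_t(0) if q+1 ≤ j,t ≤ n and 1 ≤ s ≤ q; and ∂^3u/∂z_s∂z_j∂z_t(0) = 0 for all 1 ≤ s,j,t ≤ n. -/

import Mathlib

open Complex Asymptotics

attribute [local instance] Classical.propDecidable

noncomputable section

/-- `ℂⁿ` as `Fin n → ℂ`. -/
abbrev Cn (n : ℕ) := Fin n → ℂ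

/-- Wirtinger derivative `∂/∂z_j = (1/2)(∂/∂x_{2j-1} − i ∂/∂x_{2j})`. -/
def wd {n : ℕ} (j : Fin n) (f : Cn n → ℂ) : Cn n → ℂ := fun z =>
  (1 / 2 : ℂ) *
    (fderiv ℝ f z (Pi.single j 1) - Complex.I * fderiv ℝ f z (Pi.single j Complex.I))

/-- Wirtinger derivative `∂/∂z̄_j = (1/2)(∂/∂x_{2j-1} + i ∂/∂x_{2j})`. -/
def wdb {n : ℕ} (j : Fin n) (f : Cn n → ℂ) : Cn n → ℂ := fun z =>
  (1 / 2 : ℂ) *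
    (fderiv ℝ f z (Pi.single j 1) + Complex.I * fderiv ℝ f z (Pi.single j Complex.I))

/-- A real-valued function regarded as complex-valued. -/
def cplx {n : ℕ} (φ : Cn n → ℝ) : Cn n → ℂ := fun z => (φ z : ℂ)

/-- `φ` is smooth and `φ(z) = Σ_j λ_j |z_j|² + O(|z|³)` as `z → 0`. -/
def PhiOK {n : ℕ} (lam : Fin n → ℝ) (φ : Cn n → ℝ) : Prop :=
  ContDiff ℝ (⊤ : ℕ∞) φ ∧
    (fun z : Cn n => φ z - ∑ j, lam j * Complex.normSq (z j)) =O[nhds 0] fun z => ‖z‖ ^ 3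

/-- The conditions (a)–(e) on the phase function `ψ`. -/
def Admissible {n : ℕ} (lam : Fin n → ℝ) (φ : Cn n → ℝ) (ψ : Cn n → Cn n → ℂ) : Prop :=
  ContDiff ℝ (⊤ : ℕ∞) (fun p : Cn n × Cn n => ψ p.1 p.2) ∧
  -- (a)
  (∀ z, ψ z z = 0) ∧
  (∀ z w, ψ z w = - (starRingEnd ℂ) (ψ w z)) ∧
  -- (b)
  (∃ c : ℝ, 0 < c ∧ ∀ z w, c * ‖z - w‖ ^ 2 ≤ (ψ z w).im) ∧
  -- (c): on the diagonal, ∂ψ/∂z̄_j = i ∂φ/∂z̄_j, ∂ψ/∂z_j = −i ∂φ/∂z_j,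
  --      ∂ψ/∂w̄_j = −i ∂φ/∂z̄_j, ∂ψ/∂w_j = i ∂φ/∂z_j
  (∀ (z : Cn n) (j : Fin n), wdb j (fun x => ψ x z) z = Complex.I * wdb j (cplx φ) z) ∧
  (∀ (z : Cn n) (j : Fin n), wd j (fun x => ψ x z) z = - Complex.I * wd j (cplx φ) z) ∧
  (∀ (z : Cn n) (j : Fin n), wdb j (fun w => ψ z w) z = - Complex.I * wdb j (cplx φ) z) ∧
  (∀ (z : Cn n) (j : Fin n), wd j (fun w => ψ z w) z = Complex.I * wd j (cplx φ) z) ∧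
  -- (d): Σ_j (i ∂ψ/∂z̄_j + ∂φ/∂z̄_j)(−i ∂ψ/∂z_j + ∂φ/∂z_j) vanishes to infinite
  --      order on the diagonal
  (∀ (m : ℕ) (z : Cn n),
    iteratedFDeriv ℝ m
      (fun p : Cn n × Cn n =>
        ∑ j, (Complex.I * wdb j (fun x => ψ x p.2) p.1 + wdb j (cplx φ) p.1) *
             (- Complex.I * wd j (fun x => ψ x p.2) p.1 + wd j (cplx φ) p.1))
      (z, z) = 0) ∧
  -- (e)
  ((fun p : Cn n × Cn n =>
      ψ p.1 p.2 -
        (Complex.I * ∑ j, ((|lam j| * Complex.normSq (p.1 j - p.2 j) : ℝ) : ℂ)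
          + Complex.I * ∑ j, ((lam j : ℝ) : ℂ) *
              ((starRingEnd ℂ) (p.1 j) * p.2 j - (starRingEnd ℂ) (p.2 j) * p.1 j)))
    =O[nhds 0] fun p => ‖p‖ ^ 3)

/-!
Put `F x = ∂ₓφ + σ i ∂ₓψ` for a Wirtinger direction `x` of sign `σ` in the variable `z`. The `F x`
vanish on the diagonal, so the third derivative of the eikonal equation `∑ j, F z̄_j * F z_j = 0`
at the origin only involves their first and second derivatives there. As the Hessians are
diagonal, `F x` pairs with its conjugate alone, with weight `|λ| + σ λ`: each direction is either
active, of weight `2 |λ|`, or inactive, of weight `0`. The result is a weighted mean: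
`-i ψ_xyz` is `φ_xyz` times the mean of the signs of the three directions, unless all three are
inactive. Combined with the conjugate equation this gives `u_xyz`, unless the three directions or
their three conjugates are all inactive.

When all three are active, the same equation along two `z`-directions and one diagonal direction,
together with the vanishing of `ψ` and of the `F x` along the diagonal, determines all mixed third
derivatives of `ψ`, hence those of `ψ(0, ·) = -conj ψ(·, 0)`, and again `u_xyz`. The remaining case
is complex conjugate to this one.
-/

open scoped ContDiff Topology

/-- The derivative of `f` along the complexified tangent vector `v.1 + i v.2`. Such vectors are
encoded as pairs of real vectors, so that `wd` and `wdb` are derivatives of this kind. -/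
def cxDeriv {E : Type*} [NormedAddCommGroup E] [NormedSpace ℝ E] (v : E × E) (f : E → ℂ) : E → ℂ :=
  fun x => fderiv ℝ f x v.1 + I * fderiv ℝ f x v.2

local notation "∂[" v "]" => cxDeriv v

section ComplexifiedDerivative

variable {E F : Type*} [NormedAddCommGroup E] [NormedSpace ℝ E]
  [NormedAddCommGroup F] [NormedSpace ℝ F]

lemma cxDeriv_eq_comp_fderiv (v : E × E) (f : E → ℂ) :
    ∂[v] f = (ContinuousLinearMap.apply ℝ ℂ v.1 + I • ContinuousLinearMap.apply ℝ ℂ v.2) ∘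
      fderiv ℝ f := by
  ext x
  simp [cxDeriv]

lemma contDiff_cxDeriv {f : E → ℂ} (hf : ContDiff ℝ ∞ f) (v : E × E) :
    ContDiff ℝ ∞ (∂[v] f) := by
  rw [cxDeriv_eq_comp_fderiv]
  exact (ContinuousLinearMap.contDiff _).comp (hf.fderiv_right (by simp))

lemma cxDeriv_const (v : E × E) (c : ℂ) : ∂[v] (fun _ => c) = fun _ => 0 := by
  ext x
  simp [cxDeriv]

lemma cxDeriv_add_vec (v w : E × E) (f : E → ℂ) :
    ∂[v + w] f = fun x => ∂[v] f x + ∂[w] f x := by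
  ext x
  simp only [cxDeriv, Prod.fst_add, Prod.snd_add, map_add]
  ring

lemma cxDeriv_const_mul (v : E × E) (c : ℂ) (f : E → ℂ) :
    ∂[v] (fun x => c * f x) = fun x => c * ∂[v] f x := by
  ext x
  have h : fderiv ℝ (fun x => c * f x) x = c • fderiv ℝ f x :=
    congrFun (fderiv_const_smul_field c) x
  simp only [cxDeriv, h, smul_apply, smul_eq_mul]
  ring

lemma cxDeriv_add (v : E × E) {f g : E → ℂ} (hf : Differentiable ℝ f)
    (hg : Differentiable ℝ g) :
    ∂[v] (fun x => f x + g x) = fun x => ∂[v] f x + ∂[v] g x := by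
  ext x
  simp only [cxDeriv, fderiv_fun_add (hf x) (hg x), add_apply]
  ring

lemma cxDeriv_sum (v : E × E) {ι : Type*} (s : Finset ι) {f : ι → E → ℂ}
    (hf : ∀ i, Differentiable ℝ (f i)) :
    ∂[v] (fun x => ∑ i ∈ s, f i x) = fun x => ∑ i ∈ s, ∂[v] (f i) x := by
  ext x
  simp [cxDeriv, fderiv_fun_sum fun i _ => hf i x, Finset.sum_add_distrib, Finset.mul_sum]

lemma cxDeriv_mul (v : E × E) {f g : E → ℂ} (hf : Differentiable ℝ f)
    (hg : Differentiable ℝ g) :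
    ∂[v] (fun x => f x * g x) = fun x => ∂[v] f x * g x + f x * ∂[v] g x := by
  ext x
  simp only [cxDeriv, fderiv_fun_mul (hf x) (hg x), add_apply, smul_apply, smul_eq_mul]
  ring

lemma cxDeriv_conj (v : E × E) (f : E → ℂ) :
    ∂[v] (fun x => starRingEnd ℂ (f x)) = fun x => starRingEnd ℂ (∂[(v.1, -v.2)] f x) := by
  ext x
  have h : fderiv ℝ (fun x => starRingEnd ℂ (f x)) x =
      (conjCLE : ℂ →L[ℝ] ℂ).comp (fderiv ℝ f x) := conjCLE.comp_fderiv
  simp [cxDeriv, h]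

lemma cxDeriv_comp_add_const (v : E × E) (L : E →L[ℝ] F) (c : F) {f : F → ℂ}
    (hf : Differentiable ℝ f) :
    ∂[v] (fun x => f (L x + c)) = fun x => ∂[(L v.1, L v.2)] f (L x + c) := by
  ext x
  have h : fderiv ℝ (fun x => f (L x + c)) x = (fderiv ℝ f (L x + c)).comp L :=
    ((hf (L x + c)).hasFDerivAt.comp x (L.hasFDerivAt.add_const c)).fderiv
  simp [cxDeriv, h]

lemma cxDeriv_cxDeriv (v w : E × E) {f : E → ℂ} (hf : ContDiff ℝ 2 f) (x : E) :
    ∂[v] (∂[w] f) x =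
      fderiv ℝ (fderiv ℝ f) x v.1 w.1 + I * fderiv ℝ (fderiv ℝ f) x v.1 w.2 +
        I * fderiv ℝ (fderiv ℝ f) x v.2 w.1 - fderiv ℝ (fderiv ℝ f) x v.2 w.2 := by
  have hf' : DifferentiableAt ℝ (fderiv ℝ f) x :=
    (hf.fderiv_right (m := 1) le_rfl).differentiable one_ne_zero x
  rw [cxDeriv_eq_comp_fderiv w, cxDeriv, fderiv_comp x (by fun_prop) hf']
  simp only [ContinuousLinearMap.fderiv, ContinuousLinearMap.comp_apply, add_apply, smul_apply,
    ContinuousLinearMap.apply_apply, smul_eq_mul]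
  linear_combination fderiv ℝ (fderiv ℝ f) x v.2 w.2 * I_mul_I

lemma cxDeriv_comm (v w : E × E) {f : E → ℂ} (hf : ContDiff ℝ 2 f) :
    ∂[v] (∂[w] f) = ∂[w] (∂[v] f) := by
  ext x
  have hsymm : IsSymmSndFDerivAt ℝ f x := hf.contDiffAt.isSymmSndFDerivAt (by simp)
  rw [cxDeriv_cxDeriv v w hf, cxDeriv_cxDeriv w v hf, hsymm.eq v.1 w.1, hsymm.eq v.1 w.2,
    hsymm.eq v.2 w.1, hsymm.eq v.2 w.2]
  ring

lemma iteratedFDeriv_cxDeriv_eq_zero (v : E × E) {f : E → ℂ} (hf : ContDiff ℝ ∞ f) {x : E}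
    {m : ℕ} (h : iteratedFDeriv ℝ (m + 1) f x = 0) : iteratedFDeriv ℝ m (∂[v] f) x = 0 := by
  have hf' : ContDiff ℝ ∞ (fderiv ℝ f) := hf.fderiv_right (by simp)
  have h0 : iteratedFDeriv ℝ m (fderiv ℝ f) x = 0 := by
    rw [← norm_eq_zero, norm_iteratedFDeriv_fderiv, h, norm_zero]
  rw [cxDeriv_eq_comp_fderiv, ContinuousLinearMap.iteratedFDeriv_comp_left _ hf'.contDiffAt
    (mod_cast le_top), h0]
  ext
  simp

end ComplexifiedDerivative

section QuadraticRemainder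

variable {E F : Type*} [NormedAddCommGroup E] [NormedSpace ℝ E]
  [NormedAddCommGroup F] [NormedSpace ℝ F]

lemma iteratedDeriv_eq_zero_of_isLittleO_pow {g : ℝ → F} {n : ℕ} (hg : ContDiff ℝ n g)
    (h : g =o[𝓝 0] fun t => t ^ n) : iteratedDeriv n g 0 = 0 := by
  induction n using Nat.strong_induction_on with
  | _ n ih =>
  have hlower : ∀ k < n, iteratedDeriv k g 0 = 0 := fun k hk =>
    ih k hk (hg.of_le (mod_cast hk.le)) (h.trans (isLittleO_pow_pow hk))
  have htaylor (t : ℝ) : taylorWithinEval g n Set.univ 0 t =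
      ((n.factorial : ℝ)⁻¹ * t ^ n) • iteratedDeriv n g 0 := by
    simp only [taylor_within_apply, iteratedDerivWithin_univ, sub_zero]
    exact Finset.sum_eq_single_of_mem n (by simp) fun k hk hkn => by
      rw [hlower k (by grind), smul_zero]
  have hsmall : (fun t : ℝ => ((n.factorial : ℝ)⁻¹ * t ^ n) • iteratedDeriv n g 0) =o[𝓝 0]
      fun t => t ^ n := by
    have hrem := taylor_isLittleO_univ (x₀ := 0) hg
    simp only [htaylor, sub_zero] at hrem
    simpa using h.sub hrem
  have hconst : (fun _ : ℝ => (n.factorial : ℝ)⁻¹ • iteratedDeriv n g 0) =o[𝓝[≠] 0]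
      fun _ => (1 : ℝ) := by
    refine ((isBigO_refl (fun t : ℝ => (t ^ n)⁻¹) _).smul_isLittleO
      (hsmall.mono nhdsWithin_le_nhds)).congr' ?_ ?_
    all_goals
      filter_upwards [self_mem_nhdsWithin] with t (ht : t ≠ 0)
      simp only [smul_smul, smul_eq_mul]
      field_simp
  simpa [Nat.factorial_ne_zero] using hconst

lemma iteratedFDeriv_diagonal_eq_zero_of_isLittleO_pow {f : E → F} {n : ℕ}
    (hf : ContDiff ℝ n f) (h : f =o[𝓝 0] fun x => ‖x‖ ^ n) (v : E) :
    iteratedFDeriv ℝ n f 0 (fun _ => v) = 0 := by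
  let line : ℝ →L[ℝ] E := (ContinuousLinearMap.id ℝ ℝ).smulRight v
  have hline : (f ∘ line) =o[𝓝 0] fun t : ℝ => t ^ n := by
    have h0 : Filter.Tendsto line (𝓝 0) (𝓝 0) := by simpa using line.continuous.tendsto 0
    refine (h.comp_tendsto h0).trans_isBigO ?_
    exact (line.isBigO_id (𝓝 0)).norm_left.pow n
  have := iteratedDeriv_eq_zero_of_isLittleO_pow (hf.comp line.contDiff) hline
  rw [iteratedDeriv_eq_iteratedFDeriv, line.iteratedFDeriv_comp_right hf _ le_rfl] at this
  simpa [line] using this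

lemma cxDeriv_cxDeriv_eq_zero_of_isLittleO_sq {f : E → ℂ} (hf : ContDiff ℝ 2 f)
    (h : f =o[𝓝 0] fun x => ‖x‖ ^ 2) (v w : E × E) : ∂[v] (∂[w] f) 0 = 0 := by
  have hdiag (a : E) : fderiv ℝ (fderiv ℝ f) 0 a a = 0 := by
    simpa [iteratedFDeriv_two_apply] using
      iteratedFDeriv_diagonal_eq_zero_of_isLittleO_pow hf h a
  have hsymm : IsSymmSndFDerivAt ℝ f 0 := hf.contDiffAt.isSymmSndFDerivAt (by simp)
  have hpolar (a b : E) : fderiv ℝ (fderiv ℝ f) 0 a b = 0 := by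
    have hab := hdiag (a + b)
    simp only [map_add, add_apply, hdiag, hsymm.eq b a] at hab
    linear_combination hab / 2
  simp [cxDeriv_cxDeriv v w hf, hpolar]

end QuadraticRemainder

/-- The third derivative of `f` at `x` along three complexified tangent vectors, encoded as for
`cxDeriv`. -/
def cxDeriv₃ {E : Type*} [NormedAddCommGroup E] [NormedSpace ℝ E] (u v w : E × E) (f : E → ℂ)
    (x : E) : ℂ :=
  ∂[u] (∂[v] (∂[w] f)) x

section ThirdDerivative

variable {E F : Type*} [NormedAddCommGroup E] [NormedSpace ℝ E]
  [NormedAddCommGroup F] [NormedSpace ℝ F]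

lemma cxDeriv₃_swap_left (u v w : E × E) {f : E → ℂ} (hf : ContDiff ℝ ∞ f) (x : E) :
    cxDeriv₃ u v w f x = cxDeriv₃ v u w f x := by
  rw [cxDeriv₃, cxDeriv_comm u v (contDiff_infty.1 (contDiff_cxDeriv hf w) 2), cxDeriv₃]

lemma cxDeriv₃_swap_right (u v w : E × E) {f : E → ℂ} (hf : ContDiff ℝ ∞ f) (x : E) :
    cxDeriv₃ u v w f x = cxDeriv₃ u w v f x := by
  rw [cxDeriv₃, cxDeriv_comm v w (contDiff_infty.1 hf 2), cxDeriv₃]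

lemma cxDeriv₃_rotate (u v w : E × E) {f : E → ℂ} (hf : ContDiff ℝ ∞ f) (x : E) :
    cxDeriv₃ u v w f x = cxDeriv₃ w u v f x := by
  rw [cxDeriv₃_swap_right _ _ _ hf, cxDeriv₃_swap_left _ _ _ hf]

lemma cxDeriv₃_add_left (u u' v w : E × E) (f : E → ℂ) (x : E) :
    cxDeriv₃ (u + u') v w f x = cxDeriv₃ u v w f x + cxDeriv₃ u' v w f x := by
  simp only [cxDeriv₃, cxDeriv_add_vec]

lemma cxDeriv₃_add_middle (u v v' w : E × E) {f : E → ℂ} (hf : ContDiff ℝ ∞ f) (x : E) :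
    cxDeriv₃ u (v + v') w f x = cxDeriv₃ u v w f x + cxDeriv₃ u v' w f x := by
  rw [cxDeriv₃_swap_left _ _ _ hf, cxDeriv₃_add_left, cxDeriv₃_swap_left v _ _ hf,
    cxDeriv₃_swap_left v' _ _ hf]

lemma cxDeriv₃_add_right (u v w w' : E × E) {f : E → ℂ} (hf : ContDiff ℝ ∞ f) (x : E) :
    cxDeriv₃ u v (w + w') f x = cxDeriv₃ u v w f x + cxDeriv₃ u v w' f x := by
  rw [cxDeriv₃_swap_right _ _ _ hf, cxDeriv₃_add_middle _ _ _ _ hf,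
    cxDeriv₃_swap_right _ w _ hf, cxDeriv₃_swap_right _ w' _ hf]

lemma cxDeriv₃_const_mul (u v w : E × E) (c : ℂ) (f : E → ℂ) (x : E) :
    cxDeriv₃ u v w (fun y => c * f y) x = c * cxDeriv₃ u v w f x := by
  simp only [cxDeriv₃, cxDeriv_const_mul]

lemma differentiable_cxDeriv {f : E → ℂ} (hf : ContDiff ℝ ∞ f) (v : E × E) :
    Differentiable ℝ (∂[v] f) :=
  (contDiff_cxDeriv hf v).differentiable (by simp)

lemma cxDeriv₃_add (u v w : E × E) {f g : E → ℂ} (hf : ContDiff ℝ ∞ f) (hg : ContDiff ℝ ∞ g)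
    (x : E) :
    cxDeriv₃ u v w (fun y => f y + g y) x = cxDeriv₃ u v w f x + cxDeriv₃ u v w g x := by
  rw [cxDeriv₃, cxDeriv_add _ (hf.differentiable (by simp)) (hg.differentiable (by simp)),
    cxDeriv_add _ (differentiable_cxDeriv hf w) (differentiable_cxDeriv hg w),
    cxDeriv_add _ (differentiable_cxDeriv (contDiff_cxDeriv hf w) v)
      (differentiable_cxDeriv (contDiff_cxDeriv hg w) v), cxDeriv₃, cxDeriv₃]

lemma cxDeriv₃_sum (u v w : E × E) {ι : Type*} (s : Finset ι) {f : ι → E → ℂ}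
    (hf : ∀ i, ContDiff ℝ ∞ (f i)) (x : E) :
    cxDeriv₃ u v w (fun y => ∑ i ∈ s, f i y) x = ∑ i ∈ s, cxDeriv₃ u v w (f i) x := by
  rw [cxDeriv₃, cxDeriv_sum _ _ fun i => (hf i).differentiable (by simp),
    cxDeriv_sum _ _ fun i => differentiable_cxDeriv (hf i) w,
    cxDeriv_sum _ _ fun i => differentiable_cxDeriv (contDiff_cxDeriv (hf i) w) v]
  rfl

lemma cxDeriv₃_conj (u v w : E × E) (f : E → ℂ) (x : E) :
    cxDeriv₃ u v w (fun y => starRingEnd ℂ (f y)) x =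
      starRingEnd ℂ (cxDeriv₃ (u.1, -u.2) (v.1, -v.2) (w.1, -w.2) f x) := by
  simp only [cxDeriv₃, cxDeriv_conj]

lemma cxDeriv₃_comp_add_const (u v w : E × E) (L : E →L[ℝ] F) (c : F) {f : F → ℂ}
    (hf : ContDiff ℝ ∞ f) (x : E) :
    cxDeriv₃ u v w (fun y => f (L y + c)) x =
      cxDeriv₃ (L u.1, L u.2) (L v.1, L v.2) (L w.1, L w.2) f (L x + c) := by
  rw [cxDeriv₃, cxDeriv_comp_add_const _ _ _ (hf.differentiable (by simp)),
    cxDeriv_comp_add_const _ _ _ (differentiable_cxDeriv hf _),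
    cxDeriv_comp_add_const _ _ _ (differentiable_cxDeriv (contDiff_cxDeriv hf _) _), cxDeriv₃]

lemma cxDeriv₃_eq_zero_of_iteratedFDeriv (u v w : E × E) {f : E → ℂ} (hf : ContDiff ℝ ∞ f)
    {x : E} (h : iteratedFDeriv ℝ 3 f x = 0) : cxDeriv₃ u v w f x = 0 := by
  have h₂ := iteratedFDeriv_cxDeriv_eq_zero w hf h
  have h₁ := iteratedFDeriv_cxDeriv_eq_zero v (contDiff_cxDeriv hf w) h₂
  have h₀ := iteratedFDeriv_cxDeriv_eq_zero u (contDiff_cxDeriv (contDiff_cxDeriv hf w) v) h₁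
  simpa [cxDeriv₃] using congrArg (fun T => T 0) h₀

lemma cxDeriv_cxDeriv_mul (u v : E × E) {f g : E → ℂ} (hf : ContDiff ℝ ∞ f)
    (hg : ContDiff ℝ ∞ g) :
    ∂[u] (∂[v] (fun y => f y * g y)) = fun x =>
      ∂[u] (∂[v] f) x * g x + ∂[v] f x * ∂[u] g x + ∂[u] f x * ∂[v] g x +
        f x * ∂[u] (∂[v] g) x := by
  have hf' := hf.differentiable (by simp)
  have hg' := hg.differentiable (by simp)
  have hfv := differentiable_cxDeriv hf v
  have hgv := differentiable_cxDeriv hg v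
  rw [cxDeriv_mul v hf' hg', cxDeriv_add u (hfv.fun_mul hg') (hf'.fun_mul hgv),
    cxDeriv_mul u hfv hg', cxDeriv_mul u hf' hgv]
  ext x
  ring

lemma cxDeriv₃_mul_of_eq_zero (u v w : E × E) {f g : E → ℂ} (hf : ContDiff ℝ ∞ f)
    (hg : ContDiff ℝ ∞ g) {x : E} (hfx : f x = 0) (hgx : g x = 0) :
    cxDeriv₃ u v w (fun y => f y * g y) x =
      (∂[u] f x * ∂[v] (∂[w] g) x + ∂[v] (∂[w] f) x * ∂[u] g x) +
      (∂[v] f x * ∂[u] (∂[w] g) x + ∂[u] (∂[w] f) x * ∂[v] g x) +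
      (∂[w] f x * ∂[u] (∂[v] g) x + ∂[u] (∂[v] f) x * ∂[w] g x) := by
  have hfw := contDiff_cxDeriv hf w
  have hgw := contDiff_cxDeriv hg w
  have hleft : ContDiff ℝ ∞ fun y => ∂[w] f y * g y := hfw.mul hg
  have hright : ContDiff ℝ ∞ fun y => f y * ∂[w] g y := hf.mul hgw
  rw [cxDeriv₃, cxDeriv_mul w (hf.differentiable (by simp)) (hg.differentiable (by simp)),
    cxDeriv_add v (hleft.differentiable (by simp)) (hright.differentiable (by simp)),
    cxDeriv_add u (differentiable_cxDeriv hleft v) (differentiable_cxDeriv hright v),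
    cxDeriv_cxDeriv_mul u v hfw hg, cxDeriv_cxDeriv_mul u v hf hgw]
  simp only [hfx, hgx]
  ring

end ThirdDerivative

/-- The complexified tangent vector `v` of `E`, placed in the first factor of `E × E`. -/
def zVec {E : Type*} [Zero E] (v : E × E) : (E × E) × (E × E) := ((v.1, 0), (v.2, 0))

/-- The complexified tangent vector `v` of `E`, placed in the second factor of `E × E`. -/
def wVec {E : Type*} [Zero E] (v : E × E) : (E × E) × (E × E) := ((0, v.1), (0, v.2))

/-- The complexified tangent vector `v` of `E`, placed on the diagonal of `E × E`. -/
def diagVec {E : Type*} (v : E × E) : (E × E) × (E × E) := ((v.1, v.1), (v.2, v.2))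

lemma zVec_add_wVec {E : Type*} [AddZeroClass E] (v : E × E) : zVec v + wVec v = diagVec v := by
  simp [zVec, wVec, diagVec]

section ProductSpace

variable {E : Type*} [NormedAddCommGroup E] [NormedSpace ℝ E]

lemma cxDeriv_slice_left (v : E × E) {f : E × E → ℂ} (hf : Differentiable ℝ f) (w : E) :
    ∂[v] (fun z => f (z, w)) = fun z => ∂[zVec v] f (z, w) := by
  simpa [zVec] using cxDeriv_comp_add_const v (.inl ℝ E E) (0, w) hf

lemma cxDeriv_diagonal (v : E × E) {f : E × E → ℂ} (hf : Differentiable ℝ f) :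
    ∂[v] (fun z => f (z, z)) = fun z => ∂[diagVec v] f (z, z) := by
  simpa [diagVec] using cxDeriv_comp_add_const v ((ContinuousLinearMap.id ℝ E).prod (.id ℝ E)) 0 hf

lemma cxDeriv_comp_fst (v : (E × E) × (E × E)) {f : E → ℂ} (hf : Differentiable ℝ f) :
    ∂[v] (fun p => f p.1) = fun p => ∂[(v.1.1, v.2.1)] f p.1 := by
  simpa using cxDeriv_comp_add_const v (.fst ℝ E E) 0 hf

lemma cxDeriv₃_slice_left (u v w : E × E) {f : E × E → ℂ} (hf : ContDiff ℝ ∞ f) (y z : E) :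
    cxDeriv₃ u v w (fun z => f (z, y)) z = cxDeriv₃ (zVec u) (zVec v) (zVec w) f (z, y) := by
  simpa [zVec] using cxDeriv₃_comp_add_const u v w (.inl ℝ E E) (0, y) hf z

lemma cxDeriv₃_slice_right (u v w : E × E) {f : E × E → ℂ} (hf : ContDiff ℝ ∞ f) (y z : E) :
    cxDeriv₃ u v w (fun z => f (y, z)) z = cxDeriv₃ (wVec u) (wVec v) (wVec w) f (y, z) := by
  simpa [wVec] using cxDeriv₃_comp_add_const u v w (.inr ℝ E E) (y, 0) hf z

lemma cxDeriv₃_diagonal (u v w : E × E) {f : E × E → ℂ} (hf : ContDiff ℝ ∞ f) (z : E) :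
    cxDeriv₃ u v w (fun z => f (z, z)) z =
      cxDeriv₃ (diagVec u) (diagVec v) (diagVec w) f (z, z) := by
  simpa [diagVec] using
    cxDeriv₃_comp_add_const u v w ((ContinuousLinearMap.id ℝ E).prod (.id ℝ E)) 0 hf z

lemma cxDeriv₃_comp_fst (u v w : (E × E) × (E × E)) {f : E → ℂ} (hf : ContDiff ℝ ∞ f)
    (p : E × E) :
    cxDeriv₃ u v w (fun p => f p.1) p =
      cxDeriv₃ (u.1.1, u.2.1) (v.1.1, v.2.1) (w.1.1, w.2.1) f p.1 := by
  simpa using cxDeriv₃_comp_add_const u v w (.fst ℝ E E) 0 hf p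

lemma cxDeriv₃_zVec_add_cxDeriv₃_wVec (u v w : E × E) {f : E × E → ℂ} (hf : ContDiff ℝ ∞ f)
    (p : E × E) :
    cxDeriv₃ (zVec u) (zVec v) (zVec w) f p + cxDeriv₃ (wVec u) (wVec v) (wVec w) f p =
      cxDeriv₃ (diagVec u) (diagVec v) (diagVec w) f p -
        (cxDeriv₃ (zVec u) (diagVec v) (diagVec w) f p +
          cxDeriv₃ (diagVec u) (zVec v) (diagVec w) f p +
          cxDeriv₃ (diagVec u) (diagVec v) (zVec w) f p) +
        (cxDeriv₃ (diagVec u) (zVec v) (zVec w) f p +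
          cxDeriv₃ (zVec u) (diagVec v) (zVec w) f p +
          cxDeriv₃ (zVec u) (zVec v) (diagVec w) f p) := by
  simp only [← zVec_add_wVec, cxDeriv₃_add_left, cxDeriv₃_add_middle _ _ _ _ hf,
    cxDeriv₃_add_right _ _ _ _ hf]
  ring

end ProductSpace

/-- A Wirtinger direction on `ℂⁿ`: `hol j` stands for `∂/∂z_j` and `anti j` for `∂/∂z̄_j`. -/
inductive WirtingerIndex (n : ℕ)
  | hol (j : Fin n)
  | anti (j : Fin n)

namespace WirtingerIndex

variable {n : ℕ}

/-- The coordinate `j` of `∂/∂z_j` or `∂/∂z̄_j`. -/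
def idx : WirtingerIndex n → Fin n
  | hol j => j
  | anti j => j

/-- The complex conjugate direction. -/
def conj : WirtingerIndex n → WirtingerIndex n
  | hol j => anti j
  | anti j => hol j

/-- The sign of `i` in the Wirtinger direction: `-1` on `∂/∂z_j` and `1` on `∂/∂z̄_j`. -/
def sign : WirtingerIndex n → ℝ
  | hol _ => -1
  | anti _ => 1

/-- The complexified tangent vector of `ℂⁿ` whose derivative `cxDeriv` is the Wirtinger
derivative. -/
def vec (x : WirtingerIndex n) : Cn n × Cn n :=
  (Pi.single x.idx (1 / 2), Pi.single x.idx (x.sign * I / 2))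

lemma sign_mul_self (x : WirtingerIndex n) : x.sign * x.sign = 1 := by
  cases x <;> norm_num [sign]

lemma sign_conj (x : WirtingerIndex n) : x.conj.sign = -x.sign := by
  cases x <;> simp [sign, conj]

lemma idx_conj (x : WirtingerIndex n) : x.conj.idx = x.idx := by
  cases x <;> rfl

lemma conj_conj (x : WirtingerIndex n) : x.conj.conj = x := by
  cases x <;> rfl

lemma vec_conj (x : WirtingerIndex n) : x.conj.vec = (x.vec.1, -x.vec.2) := by
  simp [vec, idx_conj, sign_conj, ← Pi.single_neg, neg_div]

lemma vec_eq_smul (x : WirtingerIndex n) :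
    x.vec = ((1 / 2 : ℝ) • Pi.single x.idx 1, (x.sign / 2) • Pi.single x.idx I) := by
  simp only [vec, ← Pi.single_smul, real_smul]
  congr 2 <;> push_cast <;> ring

end WirtingerIndex

open WirtingerIndex

section Wirtinger

variable {n : ℕ}

lemma wd_eq_cxDeriv (j : Fin n) (f : Cn n → ℂ) : wd j f = ∂[(hol j).vec] f := by
  ext z
  simp only [wd, cxDeriv, vec_eq_smul, map_smul, real_smul, sign, idx]
  push_cast
  ring

lemma wdb_eq_cxDeriv (j : Fin n) (f : Cn n → ℂ) : wdb j f = ∂[(anti j).vec] f := by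
  ext z
  simp only [wdb, cxDeriv, vec_eq_smul, map_smul, real_smul, sign, idx]
  push_cast
  ring

lemma contDiff_coord (k : Fin n) : ContDiff ℝ ∞ fun z : Cn n => z k :=
  contDiff_apply ℝ ℂ k

lemma contDiff_conj {E : Type*} [NormedAddCommGroup E] [NormedSpace ℝ E] {f : E → ℂ}
    (hf : ContDiff ℝ ∞ f) : ContDiff ℝ ∞ fun z => starRingEnd ℂ (f z) :=
  conjCLE.contDiff.comp hf

lemma cxDeriv_vec_coord (x : WirtingerIndex n) (k : Fin n) :
    ∂[x.vec] (fun z : Cn n => z k) = fun _ => if x = hol k then 1 else 0 := by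
  ext z
  have h : fderiv ℝ (fun z : Cn n => z k) z = ContinuousLinearMap.proj k :=
    (ContinuousLinearMap.proj (R := ℝ) (φ := fun _ : Fin n => ℂ) k).fderiv
  rw [cxDeriv, h]
  change x.vec.1 k + I * x.vec.2 k = _
  obtain rfl | hxk := eq_or_ne k x.idx
  · cases x
    · simp only [vec, sign, idx, Pi.single_eq_same, if_true]
      push_cast
      linear_combination -I_mul_I / 2
    · simp only [vec, sign, idx, Pi.single_eq_same, reduceCtorEq, if_false]
      push_cast
      linear_combination I_mul_I / 2
  · have hx : x ≠ hol k := by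
      rintro rfl
      exact hxk rfl
    simp [vec, hxk, hx]

lemma cxDeriv_vec_conj_coord (x : WirtingerIndex n) (k : Fin n) :
    ∂[x.vec] (fun z : Cn n => starRingEnd ℂ (z k)) = fun _ => if x = anti k then 1 else 0 := by
  rw [cxDeriv_conj, ← vec_conj, cxDeriv_vec_coord]
  cases x <;> simp [conj, apply_ite]

lemma cxDeriv_cxDeriv_normSq_coord (x y : WirtingerIndex n) (k : Fin n) (z : Cn n) :
    ∂[x.vec] (∂[y.vec] (fun z : Cn n => z k * starRingEnd ℂ (z k))) z =
      if k = y.idx then (if y = x.conj then 1 else 0) else 0 := by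
  rw [cxDeriv_cxDeriv_mul _ _ (contDiff_coord k) (contDiff_conj (contDiff_coord k))]
  simp only [cxDeriv_vec_coord, cxDeriv_vec_conj_coord, cxDeriv_const]
  cases x <;> cases y <;> grind [conj, idx]

lemma cxDeriv_cxDeriv_of_isLittleO_sq (c : Fin n → ℂ) {f : Cn n → ℂ} (hf : ContDiff ℝ ∞ f)
    (h : (fun z => f z - ∑ k, c k * (z k * starRingEnd ℂ (z k))) =o[𝓝 0] fun z => ‖z‖ ^ 2)
    (x y : WirtingerIndex n) :
    ∂[x.vec] (∂[y.vec] f) 0 = if y = x.conj then c y.idx else 0 := by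
  have hterm (k : Fin n) : ContDiff ℝ ∞ fun z : Cn n => c k * (z k * starRingEnd ℂ (z k)) :=
    contDiff_const.mul ((contDiff_coord k).mul (contDiff_conj (contDiff_coord k)))
  set Q : Cn n → ℂ := fun z => ∑ k, c k * (z k * starRingEnd ℂ (z k)) with hQ
  have hQs : ContDiff ℝ ∞ Q := ContDiff.sum fun k _ => hterm k
  have hQxy : ∂[x.vec] (∂[y.vec] Q) 0 = if y = x.conj then c y.idx else 0 := by
    rw [hQ, cxDeriv_sum _ _ fun k => (hterm k).differentiable (by simp),
      cxDeriv_sum _ _ fun k => differentiable_cxDeriv (hterm k) _]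
    simp only [cxDeriv_const_mul, cxDeriv_cxDeriv_normSq_coord]
    simp
  have hrest : ContDiff ℝ ∞ fun z => f z - Q z := hf.sub hQs
  have hfQ : f = fun z => (f z - Q z) + Q z := by simp
  rw [hfQ, cxDeriv_add _ (hrest.differentiable (by simp)) (hQs.differentiable (by simp)),
    cxDeriv_add _ (differentiable_cxDeriv hrest _) (differentiable_cxDeriv hQs _)]
  simp only [hQxy, cxDeriv_cxDeriv_eq_zero_of_isLittleO_sq (contDiff_infty.1 hrest 2) h, zero_add]

end Wirtinger

section EikonalPhase

variable {n : ℕ}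

/-- For `x = anti j` this is `∂φ/∂z̄_j + i ∂Ψ/∂z̄_j`, and for `x = hol j` it is
`∂φ/∂z_j - i ∂Ψ/∂z_j`; their products occur in the eikonal equation (d). -/
def eikonalFactor (φ : Cn n → ℝ) (Ψ : Cn n × Cn n → ℂ) (x : WirtingerIndex n) :
    Cn n × Cn n → ℂ :=
  ∂[zVec x.vec] fun p => cplx φ p.1 + x.sign * I * Ψ p

/-- `Ψ` solves the eikonal equation of the weight `φ` to third order at the origin, vanishes on
the diagonal together with all its eikonal factors, and `φ`, `Ψ` have the Hessians
`∑ λ_j |z_j|²`, `i ∑ |λ_j| |z_j|²` at the origin. -/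
structure IsEikonalPhase (lam : Fin n → ℝ) (φ : Cn n → ℝ) (Ψ : Cn n × Cn n → ℂ) : Prop where
  contDiff_weight : ContDiff ℝ ∞ (cplx φ)
  contDiff_phase : ContDiff ℝ ∞ Ψ
  diagonal : ∀ z, Ψ (z, z) = 0
  skew : ∀ z w, Ψ (z, w) = -starRingEnd ℂ (Ψ (w, z))
  factor_diagonal : ∀ x z, eikonalFactor φ Ψ x (z, z) = 0
  eikonal : ∀ u v w, cxDeriv₃ u v w
    (fun p => ∑ j, eikonalFactor φ Ψ (anti j) p * eikonalFactor φ Ψ (hol j) p) 0 = 0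
  hessian_weight : ∀ x y : WirtingerIndex n,
    ∂[x.vec] (∂[y.vec] (cplx φ)) 0 = if y = x.conj then (lam y.idx : ℂ) else 0
  hessian_phase : ∀ x y : WirtingerIndex n,
    ∂[x.vec] (∂[y.vec] fun z => Ψ (z, 0)) 0 = if y = x.conj then I * (|lam y.idx| : ℝ) else 0

section Factor

variable {φ : Cn n → ℝ} {Ψ : Cn n × Cn n → ℂ} (hφ : ContDiff ℝ ∞ (cplx φ)) (hΨ : ContDiff ℝ ∞ Ψ)
include hφ hΨ

lemma contDiff_eikonalFactor (x : WirtingerIndex n) : ContDiff ℝ ∞ (eikonalFactor φ Ψ x) :=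
  contDiff_cxDeriv (hφ.fst'.add (contDiff_const.mul hΨ)) _

lemma eikonalFactor_apply (x : WirtingerIndex n) (p : Cn n × Cn n) :
    eikonalFactor φ Ψ x p = ∂[x.vec] (cplx φ) p.1 + x.sign * I * ∂[zVec x.vec] Ψ p := by
  have hfst : Differentiable ℝ fun p : Cn n × Cn n => cplx φ p.1 :=
    hφ.fst'.differentiable (by simp)
  rw [eikonalFactor, cxDeriv_add _ hfst ((contDiff_const.mul hΨ).differentiable (by simp)),
    cxDeriv_const_mul, cxDeriv_comp_fst _ (hφ.differentiable (by simp))]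
  rfl

lemma cxDeriv_cxDeriv_eikonalFactor (a b : (Cn n × Cn n) × (Cn n × Cn n))
    (x : WirtingerIndex n) (p : Cn n × Cn n) :
    ∂[a] (∂[b] (eikonalFactor φ Ψ x)) p =
      cxDeriv₃ (a.1.1, a.2.1) (b.1.1, b.2.1) x.vec (cplx φ) p.1 +
        x.sign * I * cxDeriv₃ a b (zVec x.vec) Ψ p := by
  change cxDeriv₃ a b (zVec x.vec) (fun p => cplx φ p.1 + x.sign * I * Ψ p) p = _
  rw [cxDeriv₃_add _ _ _ hφ.fst' (contDiff_const.mul hΨ), cxDeriv₃_const_mul,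
    cxDeriv₃_comp_fst _ _ _ hφ]
  rfl

end Factor

lemma isLittleO_norm_sq_of_isBigO_cube {E F : Type*} [NormedAddCommGroup E]
    [NormedAddCommGroup F] {f : E → F} (h : f =O[𝓝 0] fun z => ‖z‖ ^ 3) :
    f =o[𝓝 0] fun z => ‖z‖ ^ 2 :=
  h.trans_isLittleO (isLittleO_norm_pow_norm_pow (by norm_num))

lemma cplx_sub_isLittleO_sq {lam : Fin n → ℝ} {φ : Cn n → ℝ}
    (h : (fun z : Cn n => φ z - ∑ j, lam j * normSq (z j)) =O[𝓝 0] fun z => ‖z‖ ^ 3) :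
    (fun z => cplx φ z - ∑ k, (lam k : ℂ) * (z k * starRingEnd ℂ (z k))) =o[𝓝 0]
      fun z => ‖z‖ ^ 2 := by
  refine isLittleO_norm_sq_of_isBigO_cube ((isBigO_ofReal_left.2 h).congr_left fun z => ?_)
  simp [cplx, mul_conj]

lemma phase_slice_sub_isLittleO_sq {lam : Fin n → ℝ} {ψ : Cn n → Cn n → ℂ}
    (h : (fun p : Cn n × Cn n => ψ p.1 p.2 -
        (I * ∑ j, ((|lam j| * normSq (p.1 j - p.2 j) : ℝ) : ℂ) + I * ∑ j, ((lam j : ℝ) : ℂ) *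
          (starRingEnd ℂ (p.1 j) * p.2 j - starRingEnd ℂ (p.2 j) * p.1 j))) =O[𝓝 0]
      fun p => ‖p‖ ^ 3) :
    (fun z => ψ z 0 - ∑ k, I * (|lam k| : ℝ) * (z k * starRingEnd ℂ (z k))) =o[𝓝 0]
      fun z => ‖z‖ ^ 2 := by
  have hslice : Filter.Tendsto (fun z : Cn n => (z, (0 : Cn n))) (𝓝 0) (𝓝 0) :=
    Continuous.tendsto (by fun_prop) 0
  refine isLittleO_norm_sq_of_isBigO_cube ?_
  simpa [Function.comp_def, mul_conj, Finset.mul_sum, mul_assoc] using h.comp_tendsto hslice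

lemma isEikonalPhase_of_admissible {lam : Fin n → ℝ} {φ : Cn n → ℝ} (hφ : PhiOK lam φ)
    {ψ : Cn n → Cn n → ℂ} (hψ : Admissible lam φ ψ) :
    IsEikonalPhase lam φ fun p => ψ p.1 p.2 := by
  obtain ⟨hφs, hφO⟩ := hφ
  obtain ⟨hψs, hdiag, hskew, -, hanti, hhol, -, -, heik, hψO⟩ := hψ
  have hφc : ContDiff ℝ ∞ (cplx φ) := ofRealCLM.contDiff.comp hφs
  have hψd : Differentiable ℝ fun p : Cn n × Cn n => ψ p.1 p.2 := hψs.differentiable (by simp)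
  have hslice (x : WirtingerIndex n) (p : Cn n × Cn n) :
      ∂[zVec x.vec] (fun p => ψ p.1 p.2) p = ∂[x.vec] (fun z => ψ z p.2) p.1 :=
    (congrFun (cxDeriv_slice_left x.vec hψd p.2) p.1).symm
  have hfactor_anti (j : Fin n) (p : Cn n × Cn n) :
      eikonalFactor φ (fun p => ψ p.1 p.2) (anti j) p =
        I * wdb j (fun z => ψ z p.2) p.1 + wdb j (cplx φ) p.1 := by
    rw [eikonalFactor_apply hφc hψs, hslice, wdb_eq_cxDeriv, wdb_eq_cxDeriv]
    simp [sign, add_comm]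
  have hfactor_hol (j : Fin n) (p : Cn n × Cn n) :
      eikonalFactor φ (fun p => ψ p.1 p.2) (hol j) p =
        -I * wd j (fun z => ψ z p.2) p.1 + wd j (cplx φ) p.1 := by
    rw [eikonalFactor_apply hφc hψs, hslice, wd_eq_cxDeriv, wd_eq_cxDeriv]
    simp [sign, add_comm]
  refine ⟨hφc, hψs, hdiag, hskew, ?_, ?_, ?_, ?_⟩
  · rintro (j | j) z
    · rw [hfactor_hol, hhol]
      linear_combination wd j (cplx φ) z * I_mul_I
    · rw [hfactor_anti, hanti]
      linear_combination wdb j (cplx φ) z * I_mul_I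
  · intro u v w
    refine cxDeriv₃_eq_zero_of_iteratedFDeriv u v w (ContDiff.sum fun j _ =>
      (contDiff_eikonalFactor hφc hψs _).mul (contDiff_eikonalFactor hφc hψs _)) ?_
    simp only [hfactor_anti, hfactor_hol]
    exact heik 3 0
  · exact cxDeriv_cxDeriv_of_isLittleO_sq (fun k => lam k) hφc (cplx_sub_isLittleO_sq hφO)
  · exact cxDeriv_cxDeriv_of_isLittleO_sq (fun k => I * (|lam k| : ℝ))
      (hψs.comp (contDiff_id.prodMk contDiff_const)) (phase_slice_sub_isLittleO_sq hψO)

/-- The third Wirtinger derivative at the origin. -/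
def wirtinger₃ (x y z : WirtingerIndex n) (f : Cn n → ℂ) : ℂ := cxDeriv₃ x.vec y.vec z.vec f 0

lemma wirtinger₃_conj (x y z : WirtingerIndex n) (f : Cn n → ℂ) :
    wirtinger₃ x y z (fun p => starRingEnd ℂ (f p)) =
      starRingEnd ℂ (wirtinger₃ x.conj y.conj z.conj f) := by
  simp only [wirtinger₃, cxDeriv₃_conj, vec_conj]

lemma conj_wirtinger₃_cplx (x y z : WirtingerIndex n) (g : Cn n → ℝ) :
    starRingEnd ℂ (wirtinger₃ x.conj y.conj z.conj (cplx g)) = wirtinger₃ x y z (cplx g) := by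
  rw [← wirtinger₃_conj]
  simp only [cplx, conj_ofReal]
  rfl

lemma wirtinger₃_cplx_eq_mul_of_conj {x y z : WirtingerIndex n} {f g : Cn n → ℝ} {c : ℝ}
    (h : wirtinger₃ x.conj y.conj z.conj (cplx f) =
      c * wirtinger₃ x.conj y.conj z.conj (cplx g)) :
    wirtinger₃ x y z (cplx f) = c * wirtinger₃ x y z (cplx g) := by
  simpa only [map_mul, conj_ofReal, conj_wirtinger₃_cplx] using congrArg (starRingEnd ℂ) h

/-- The weight `|λ| + σ λ` of a direction of sign `σ`: it is `2 |λ|` when `σ` is the sign of `λ`,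
and `0` otherwise. -/
def weight (lam : Fin n → ℝ) (x : WirtingerIndex n) : ℝ := |lam x.idx| + x.sign * lam x.idx

lemma weight_hol_of_pos {lam : Fin n → ℝ} {j : Fin n} (hj : 0 < lam j) :
    weight lam (hol j) = 0 := by
  simp [weight, sign, idx, abs_of_pos hj]

lemma weight_anti_of_pos {lam : Fin n → ℝ} {j : Fin n} (hj : 0 < lam j) :
    weight lam (anti j) = 2 * |lam j| := by
  simp [weight, sign, idx, abs_of_pos hj, two_mul]

lemma weight_hol_of_neg {lam : Fin n → ℝ} {j : Fin n} (hj : lam j < 0) :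
    weight lam (hol j) = 2 * |lam j| := by
  simp [weight, sign, idx, abs_of_neg hj, two_mul]

lemma weight_anti_of_neg {lam : Fin n → ℝ} {j : Fin n} (hj : lam j < 0) :
    weight lam (anti j) = 0 := by
  simp [weight, sign, idx, abs_of_neg hj]

lemma weight_nonneg (lam : Fin n → ℝ) (x : WirtingerIndex n) : 0 ≤ weight lam x := by
  cases x with
  | hol j => linarith [le_abs_self (lam j), show weight lam (hol j) = |lam j| + -1 * lam j from rfl]
  | anti j => linarith [neg_abs_le (lam j), show weight lam (anti j) = |lam j| + 1 * lam j from rfl]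

lemma weight_add_weight_conj (lam : Fin n → ℝ) (x : WirtingerIndex n) :
    weight lam x + weight lam x.conj = 2 * |lam x.idx| := by
  rw [weight, weight, idx_conj, sign_conj]
  ring

lemma weight_pos_of_weight_conj_eq_zero {lam : Fin n → ℝ} {x : WirtingerIndex n}
    (hx : lam x.idx ≠ 0) (hw : weight lam x.conj = 0) : 0 < weight lam x := by
  linarith [weight_add_weight_conj lam x, abs_pos.2 hx]

/-- The mean of the signs of the directions in `l` with respect to their weights; it is `0` when
all weights vanish. -/
def meanSign (lam : Fin n → ℝ) (l : List (WirtingerIndex n)) : ℝ :=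
  (l.map fun x => x.sign * weight lam x).sum / (l.map (weight lam)).sum

lemma meanSign_pair (lam : Fin n → ℝ) (x y : WirtingerIndex n) :
    meanSign lam [x, y] =
      (x.sign * weight lam x + y.sign * weight lam y) / (weight lam x + weight lam y) := by
  simp [meanSign]

lemma meanSign_triple (lam : Fin n → ℝ) (x y z : WirtingerIndex n) :
    meanSign lam [x, y, z] =
      (x.sign * weight lam x + y.sign * weight lam y + z.sign * weight lam z) /
        (weight lam x + weight lam y + weight lam z) := by
  simp [meanSign, add_assoc]

lemma meanSign_eq_of_forall_sign_eq {lam : Fin n → ℝ} {l : List (WirtingerIndex n)} {σ : ℝ}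
    (hl : ∀ x ∈ l, x.sign = σ) (hw : (l.map (weight lam)).sum ≠ 0) : meanSign lam l = σ := by
  have hsum : l.map (fun x => x.sign * weight lam x) = l.map fun x => σ * weight lam x :=
    List.map_congr_left fun x hx => by rw [hl x hx]
  rw [meanSign, hsum, List.sum_map_mul_left, mul_div_cancel_right₀ _ hw]

/-- The bilinear expression in the first and second derivatives of the eikonal factors at the
origin from which the third derivative of the eikonal equation is built. -/
def eikonalPairing (φ : Cn n → ℝ) (Ψ : Cn n × Cn n → ℂ) (u v w : (Cn n × Cn n) × (Cn n × Cn n)) :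
    ℂ :=
  ∑ j, (∂[u] (eikonalFactor φ Ψ (anti j)) 0 * ∂[v] (∂[w] (eikonalFactor φ Ψ (hol j))) 0 +
    ∂[v] (∂[w] (eikonalFactor φ Ψ (anti j))) 0 * ∂[u] (eikonalFactor φ Ψ (hol j)) 0)

/-- The imaginary part of `Ψ` on the slice `w = 0`. -/
def imSlice (Ψ : Cn n × Cn n → ℂ) (z : Cn n) : ℝ := (Ψ (z, 0)).im

namespace IsEikonalPhase

variable {lam : Fin n → ℝ} {φ : Cn n → ℝ} {Ψ : Cn n × Cn n → ℂ} (h : IsEikonalPhase lam φ Ψ)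
include h

lemma contDiff_factor (x : WirtingerIndex n) : ContDiff ℝ ∞ (eikonalFactor φ Ψ x) :=
  contDiff_eikonalFactor h.contDiff_weight h.contDiff_phase x

lemma cxDeriv_diagVec_factor (v : Cn n × Cn n) (x : WirtingerIndex n) :
    ∂[diagVec v] (eikonalFactor φ Ψ x) 0 = 0 := by
  have hdiag := cxDeriv_diagonal v ((h.contDiff_factor x).differentiable (by simp))
  simp only [h.factor_diagonal, cxDeriv_const] at hdiag
  exact (congrFun hdiag 0).symm

lemma cxDeriv_zVec_factor (x y : WirtingerIndex n) :
    ∂[zVec x.vec] (eikonalFactor φ Ψ y) 0 =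
      if y = x.conj then (x.sign * weight lam x : ℂ) else 0 := by
  have hslice_smooth : ContDiff ℝ ∞ fun z => Ψ (z, 0) :=
    h.contDiff_phase.comp (contDiff_id.prodMk contDiff_const)
  have hslice : (fun z => eikonalFactor φ Ψ y (z, 0)) = fun z =>
      ∂[y.vec] (cplx φ) z + y.sign * I * ∂[y.vec] (fun z => Ψ (z, 0)) z := by
    ext z
    rw [eikonalFactor_apply h.contDiff_weight h.contDiff_phase,
      cxDeriv_slice_left _ (h.contDiff_phase.differentiable (by simp))]
  have hderiv := congrFun
    (cxDeriv_slice_left x.vec ((h.contDiff_factor y).differentiable (by simp)) 0) 0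
  rw [hslice, cxDeriv_add _ (differentiable_cxDeriv h.contDiff_weight _)
    ((differentiable_cxDeriv hslice_smooth _).const_mul _), cxDeriv_const_mul] at hderiv
  simp only [h.hessian_weight, h.hessian_phase] at hderiv
  refine hderiv.symm.trans ?_
  split_ifs with hyx
  · subst hyx
    have hsign : (x.sign : ℂ) * x.sign = 1 := mod_cast x.sign_mul_self
    simp only [idx_conj, sign_conj, weight]
    push_cast
    linear_combination (-x.sign * (|lam x.idx| : ℝ) : ℂ) * I_mul_I - lam x.idx * hsign
  · simp

lemma eikonalPairing_zVec (x : WirtingerIndex n) (v w : (Cn n × Cn n) × (Cn n × Cn n)) :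
    eikonalPairing φ Ψ (zVec x.vec) v w =
      weight lam x * (x.sign * cxDeriv₃ x.vec (v.1.1, v.2.1) (w.1.1, w.2.1) (cplx φ) 0 +
        I * cxDeriv₃ (zVec x.vec) v w Ψ 0) := by
  have hsign : (x.sign : ℂ) * x.sign = 1 := mod_cast x.sign_mul_self
  have hpairing : eikonalPairing φ Ψ (zVec x.vec) v w =
      x.sign * weight lam x * ∂[v] (∂[w] (eikonalFactor φ Ψ x)) 0 := by
    simp only [eikonalPairing, h.cxDeriv_zVec_factor]
    cases x <;> simp [conj, mul_comm]
  rw [hpairing, cxDeriv_cxDeriv_eikonalFactor h.contDiff_weight h.contDiff_phase,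
    cxDeriv₃_rotate _ _ x.vec h.contDiff_weight, cxDeriv₃_rotate _ _ (zVec x.vec) h.contDiff_phase,
    Prod.fst_zero]
  linear_combination weight lam x * I * cxDeriv₃ (zVec x.vec) v w Ψ 0 * hsign

lemma eikonalPairing_diagVec (u : Cn n × Cn n) (v w : (Cn n × Cn n) × (Cn n × Cn n)) :
    eikonalPairing φ Ψ (diagVec u) v w = 0 := by
  simp [eikonalPairing, h.cxDeriv_diagVec_factor]

lemma eikonalPairing_cyclic_sum (u v w : (Cn n × Cn n) × (Cn n × Cn n)) :
    eikonalPairing φ Ψ u v w + eikonalPairing φ Ψ v u w + eikonalPairing φ Ψ w u v = 0 := by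
  have heik := h.eikonal u v w
  rw [cxDeriv₃_sum _ _ _ _ fun j => (h.contDiff_factor _).mul (h.contDiff_factor _)] at heik
  rw [← heik]
  simp only [eikonalPairing, ← Finset.sum_add_distrib]
  refine Finset.sum_congr rfl fun j _ => ?_
  exact (cxDeriv₃_mul_of_eq_zero u v w (h.contDiff_factor _) (h.contDiff_factor _)
    (h.factor_diagonal _ 0) (h.factor_diagonal _ 0)).symm

lemma cxDeriv₃_phase_zVec_zVec_zVec (x y z : WirtingerIndex n) :
    (weight lam x + weight lam y + weight lam z) *
        (I * cxDeriv₃ (zVec x.vec) (zVec y.vec) (zVec z.vec) Ψ 0) =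
      -(x.sign * weight lam x + y.sign * weight lam y + z.sign * weight lam z) *
        wirtinger₃ x y z (cplx φ) := by
  have heik := h.eikonalPairing_cyclic_sum (zVec x.vec) (zVec y.vec) (zVec z.vec)
  rw [h.eikonalPairing_zVec, h.eikonalPairing_zVec, h.eikonalPairing_zVec,
    cxDeriv₃_swap_left (zVec y.vec) _ _ h.contDiff_phase,
    ← cxDeriv₃_rotate _ _ (zVec z.vec) h.contDiff_phase,
    cxDeriv₃_swap_left y.vec _ _ h.contDiff_weight,
    ← cxDeriv₃_rotate _ _ z.vec h.contDiff_weight] at heik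
  change _ * (_ * wirtinger₃ x y z (cplx φ) + _) + _ * (_ * wirtinger₃ x y z (cplx φ) + _) +
    _ * (_ * wirtinger₃ x y z (cplx φ) + _) = 0 at heik
  linear_combination heik

lemma cxDeriv₃_phase_zVec_zVec_diagVec (x y z : WirtingerIndex n) :
    (weight lam x + weight lam y) *
        (I * cxDeriv₃ (zVec x.vec) (zVec y.vec) (diagVec z.vec) Ψ 0) =
      -(x.sign * weight lam x + y.sign * weight lam y) * wirtinger₃ x y z (cplx φ) := by
  have heik := h.eikonalPairing_cyclic_sum (zVec x.vec) (zVec y.vec) (diagVec z.vec)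
  rw [h.eikonalPairing_zVec, h.eikonalPairing_zVec, h.eikonalPairing_diagVec,
    cxDeriv₃_swap_left (zVec y.vec) _ _ h.contDiff_phase,
    cxDeriv₃_swap_left y.vec _ _ h.contDiff_weight] at heik
  change _ * (_ * wirtinger₃ x y z (cplx φ) + _) + _ * (_ * wirtinger₃ x y z (cplx φ) + _) + 0 =
    0 at heik
  linear_combination heik

lemma cxDeriv₃_phase_diagVec_diagVec_zVec (x y z : WirtingerIndex n) :
    I * cxDeriv₃ (diagVec x.vec) (diagVec y.vec) (zVec z.vec) Ψ 0 =
      -z.sign * wirtinger₃ x y z (cplx φ) := by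
  have hsign : (z.sign : ℂ) * z.sign = 1 := mod_cast z.sign_mul_self
  have hF := h.contDiff_factor z
  have hy := cxDeriv_diagonal y.vec (hF.differentiable (by simp))
  have hx := cxDeriv_diagonal x.vec (differentiable_cxDeriv hF (diagVec y.vec))
  simp only [← hy, h.factor_diagonal, cxDeriv_const] at hx
  have hzero := (cxDeriv_cxDeriv_eikonalFactor h.contDiff_weight h.contDiff_phase
    (diagVec x.vec) (diagVec y.vec) z 0).symm.trans (congrFun hx 0).symm
  change wirtinger₃ x y z (cplx φ) + _ = 0 at hzero
  linear_combination z.sign * hzero -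
    I * cxDeriv₃ (diagVec x.vec) (diagVec y.vec) (zVec z.vec) Ψ 0 * hsign

lemma cxDeriv₃_phase_diagVec_diagVec_diagVec (x y z : WirtingerIndex n) :
    cxDeriv₃ (diagVec x.vec) (diagVec y.vec) (diagVec z.vec) Ψ 0 = 0 := by
  have hdiag := cxDeriv₃_diagonal x.vec y.vec z.vec h.contDiff_phase 0
  simp only [h.diagonal, cxDeriv₃, cxDeriv_const] at hdiag
  exact hdiag.symm

lemma wirtinger₃_phase_slice_eq_meanSign {x y z : WirtingerIndex n}
    (hw : weight lam x + weight lam y + weight lam z ≠ 0) :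
    I * wirtinger₃ x y z (fun p => Ψ (p, 0)) =
      -meanSign lam [x, y, z] * wirtinger₃ x y z (cplx φ) := by
  have hwc : (weight lam x + weight lam y + weight lam z : ℂ) ≠ 0 := mod_cast hw
  refine mul_left_cancel₀ hwc ?_
  rw [wirtinger₃, cxDeriv₃_slice_left _ _ _ h.contDiff_phase]
  refine (h.cxDeriv₃_phase_zVec_zVec_zVec x y z).trans ?_
  rw [meanSign_triple]
  push_cast
  field_simp

lemma cxDeriv₃_phase_zVec_zVec_diagVec_eq_meanSign {x y : WirtingerIndex n}
    (hw : weight lam x + weight lam y ≠ 0) (z : WirtingerIndex n) :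
    I * cxDeriv₃ (zVec x.vec) (zVec y.vec) (diagVec z.vec) Ψ 0 =
      -meanSign lam [x, y] * wirtinger₃ x y z (cplx φ) := by
  have hwc : (weight lam x + weight lam y : ℂ) ≠ 0 := mod_cast hw
  refine mul_left_cancel₀ hwc ?_
  rw [h.cxDeriv₃_phase_zVec_zVec_diagVec]
  rw [meanSign_pair]
  push_cast
  field_simp

lemma contDiff_slice : ContDiff ℝ ∞ fun z => Ψ (z, 0) :=
  h.contDiff_phase.comp (contDiff_id.prodMk contDiff_const)

lemma wirtinger₃_imSlice_eq_sub_conj (x y z : WirtingerIndex n) :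
    wirtinger₃ x y z (cplx (imSlice Ψ)) =
      -(I / 2) * (wirtinger₃ x y z (fun p => Ψ (p, 0)) -
        starRingEnd ℂ (wirtinger₃ x.conj y.conj z.conj fun p => Ψ (p, 0))) := by
  have him : cplx (imSlice Ψ) =
      fun p => -(I / 2) * (Ψ (p, 0) + -1 * starRingEnd ℂ (Ψ (p, 0))) := by
    ext p
    rw [cplx, imSlice, im_eq_sub_conj]
    field_simp
    linear_combination (Ψ (p, 0) - starRingEnd ℂ (Ψ (p, 0))) * I_sq
  have hconj := contDiff_conj h.contDiff_slice
  rw [him, ← wirtinger₃_conj, wirtinger₃, cxDeriv₃_const_mul,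
    cxDeriv₃_add _ _ _ h.contDiff_slice (contDiff_const.mul hconj), cxDeriv₃_const_mul,
    wirtinger₃, wirtinger₃]
  ring

lemma wirtinger₃_imSlice_eq_of_weight_ne_zero {x y z : WirtingerIndex n}
    (hw : weight lam x + weight lam y + weight lam z ≠ 0)
    (hw_conj : weight lam x.conj + weight lam y.conj + weight lam z.conj ≠ 0) :
    wirtinger₃ x y z (cplx (imSlice Ψ)) =
      ((meanSign lam [x, y, z] + meanSign lam [x.conj, y.conj, z.conj]) / 2 : ℝ) *
        wirtinger₃ x y z (cplx φ) := by
  have hconj := congrArg (starRingEnd ℂ) (h.wirtinger₃_phase_slice_eq_meanSign hw_conj)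
  simp only [map_mul, map_neg, conj_ofReal, conj_wirtinger₃_cplx, conj_I] at hconj
  rw [h.wirtinger₃_imSlice_eq_sub_conj]
  push_cast
  linear_combination -(1 / 2 : ℂ) * h.wirtinger₃_phase_slice_eq_meanSign hw - (1 / 2 : ℂ) * hconj

lemma conj_wirtinger₃_slice (x y z : WirtingerIndex n) :
    starRingEnd ℂ (wirtinger₃ x.conj y.conj z.conj fun p => Ψ (p, 0)) =
      -cxDeriv₃ (wVec x.vec) (wVec y.vec) (wVec z.vec) Ψ 0 := by
  have hskew : (fun p => starRingEnd ℂ (Ψ (p, 0))) = fun p => -1 * Ψ (0, p) := by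
    ext p
    rw [h.skew 0 p]
    ring
  rw [← wirtinger₃_conj, hskew, wirtinger₃, cxDeriv₃_const_mul,
    cxDeriv₃_slice_right _ _ _ h.contDiff_phase, neg_one_mul]
  rfl

lemma wirtinger₃_imSlice_eq_of_pair_weight_ne_zero {x y z : WirtingerIndex n}
    (hxy : weight lam x + weight lam y ≠ 0) (hxz : weight lam x + weight lam z ≠ 0)
    (hyz : weight lam y + weight lam z ≠ 0) :
    wirtinger₃ x y z (cplx (imSlice Ψ)) =
      ((meanSign lam [x, y] + meanSign lam [x, z] + meanSign lam [y, z] -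
        (x.sign + y.sign + z.sign)) / 2 : ℝ) * wirtinger₃ x y z (cplx φ) := by
  have hΨ := h.contDiff_phase
  have hφ := h.contDiff_weight
  have hzdd := h.cxDeriv₃_phase_diagVec_diagVec_zVec y z x
  have hdzd := h.cxDeriv₃_phase_diagVec_diagVec_zVec x z y
  have hddz := h.cxDeriv₃_phase_diagVec_diagVec_zVec x y z
  have hdzz := h.cxDeriv₃_phase_zVec_zVec_diagVec_eq_meanSign hyz x
  have hzdz := h.cxDeriv₃_phase_zVec_zVec_diagVec_eq_meanSign hxz y
  have hzzd := h.cxDeriv₃_phase_zVec_zVec_diagVec_eq_meanSign hxy z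
  have hΦ_rotate : wirtinger₃ y z x (cplx φ) = wirtinger₃ x y z (cplx φ) :=
    cxDeriv₃_rotate _ _ _ hφ 0
  have hΦ_swap : wirtinger₃ x z y (cplx φ) = wirtinger₃ x y z (cplx φ) :=
    cxDeriv₃_swap_right _ _ _ hφ 0
  rw [cxDeriv₃_rotate _ _ (zVec x.vec) hΨ, hΦ_rotate] at hzdd
  rw [cxDeriv₃_rotate _ _ (diagVec x.vec) hΨ, hΦ_rotate] at hdzz
  rw [cxDeriv₃_swap_right _ _ (zVec y.vec) hΨ, hΦ_swap] at hdzd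
  rw [cxDeriv₃_swap_right _ _ (diagVec y.vec) hΨ, hΦ_swap] at hzdz
  have hsum := cxDeriv₃_zVec_add_cxDeriv₃_wVec x.vec y.vec z.vec hΨ 0
  rw [h.cxDeriv₃_phase_diagVec_diagVec_diagVec] at hsum
  rw [h.wirtinger₃_imSlice_eq_sub_conj, h.conj_wirtinger₃_slice, wirtinger₃,
    cxDeriv₃_slice_left _ _ _ hΨ, ← Prod.zero_eq_mk]
  push_cast
  linear_combination -(I / 2) * hsum + (hzdd + hdzd + hddz) / 2 - (hdzz + hzdz + hzzd) / 2

lemma wirtinger₃_imSlice_eq_zero_of_weight_pos {x y z : WirtingerIndex n} (hx : 0 < weight lam x)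
    (hy : 0 < weight lam y) (hz : 0 < weight lam z) (hxy : x.sign = y.sign)
    (hxz : x.sign = z.sign) : wirtinger₃ x y z (cplx (imSlice Ψ)) = 0 := by
  have hwxy := (add_pos hx hy).ne'
  have hwxz := (add_pos hx hz).ne'
  have hwyz := (add_pos hy hz).ne'
  rw [h.wirtinger₃_imSlice_eq_of_pair_weight_ne_zero hwxy hwxz hwyz,
    meanSign_eq_of_forall_sign_eq (σ := x.sign) (by simp [hxy]) (by simpa using hwxy),
    meanSign_eq_of_forall_sign_eq (σ := x.sign) (by simp [hxz]) (by simpa using hwxz),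
    meanSign_eq_of_forall_sign_eq (σ := x.sign) (by simp [← hxy, ← hxz]) (by simpa using hwyz),
    ← hxy, ← hxz]
  simp

lemma wirtinger₃_imSlice_eq_zero_of_weight_conj_sum_eq_zero {x y z : WirtingerIndex n}
    (hx : lam x.idx ≠ 0) (hy : lam y.idx ≠ 0) (hz : lam z.idx ≠ 0) (hxy : x.sign = y.sign)
    (hxz : x.sign = z.sign)
    (hw : weight lam x.conj + weight lam y.conj + weight lam z.conj = 0) :
    wirtinger₃ x y z (cplx (imSlice Ψ)) = 0 := by
  have hwx := weight_nonneg lam x.conj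
  have hwy := weight_nonneg lam y.conj
  have hwz := weight_nonneg lam z.conj
  exact h.wirtinger₃_imSlice_eq_zero_of_weight_pos
    (weight_pos_of_weight_conj_eq_zero hx (by linarith))
    (weight_pos_of_weight_conj_eq_zero hy (by linarith))
    (weight_pos_of_weight_conj_eq_zero hz (by linarith)) hxy hxz

lemma wirtinger₃_imSlice_eq_zero_of_sign_eq {x y z : WirtingerIndex n} (hx : lam x.idx ≠ 0)
    (hy : lam y.idx ≠ 0) (hz : lam z.idx ≠ 0) (hxy : x.sign = y.sign) (hxz : x.sign = z.sign) :
    wirtinger₃ x y z (cplx (imSlice Ψ)) = 0 := by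
  by_cases hw_conj : weight lam x.conj + weight lam y.conj + weight lam z.conj = 0
  · exact h.wirtinger₃_imSlice_eq_zero_of_weight_conj_sum_eq_zero hx hy hz hxy hxz hw_conj
  by_cases hw : weight lam x + weight lam y + weight lam z = 0
  · have hconj := h.wirtinger₃_imSlice_eq_zero_of_weight_conj_sum_eq_zero
      (x := x.conj) (y := y.conj) (z := z.conj)
      (by rwa [idx_conj]) (by rwa [idx_conj]) (by rwa [idx_conj])
      (by simp [sign_conj, hxy]) (by simp [sign_conj, hxz]) (by simpa only [conj_conj] using hw)
    rw [← conj_wirtinger₃_cplx, hconj, map_zero]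
  · rw [h.wirtinger₃_imSlice_eq_of_weight_ne_zero hw hw_conj,
      meanSign_eq_of_forall_sign_eq (σ := x.sign) (by simp [hxy, ← hxz])
        (by simpa [← add_assoc] using hw),
      meanSign_eq_of_forall_sign_eq (σ := -x.sign) (by simp [sign_conj, hxy, ← hxz])
        (by simpa [← add_assoc] using hw_conj)]
    simp

section MixedType

variable {s j t : Fin n}

lemma wirtinger₃_imSlice_anti_hol_hol_of_pos_pos_pos (hs : 0 < lam s)
    (hj : 0 < lam j) (ht : 0 < lam t) :
    wirtinger₃ (anti s) (hol j) (hol t) (cplx (imSlice Ψ)) =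
      wirtinger₃ (anti s) (hol j) (hol t) (cplx φ) := by
  have hw : weight lam (anti s) + weight lam (hol j) + weight lam (hol t) ≠ 0 := by
    rw [weight_anti_of_pos hs, weight_hol_of_pos hj, weight_hol_of_pos ht]
    positivity
  have hw_conj : weight lam (hol s) + weight lam (anti j) + weight lam (anti t) ≠ 0 := by
    rw [weight_hol_of_pos hs, weight_anti_of_pos hj, weight_anti_of_pos ht]
    positivity
  have hcoeff : (meanSign lam [anti s, hol j, hol t] +
      meanSign lam [hol s, anti j, anti t]) / 2 = 1 := by
    simp only [meanSign_triple, sign,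
      weight_anti_of_pos hs, weight_hol_of_pos hj, weight_hol_of_pos ht,
      weight_hol_of_pos hs, weight_anti_of_pos hj, weight_anti_of_pos ht]
    field_simp
    ring
  rw [h.wirtinger₃_imSlice_eq_of_weight_ne_zero hw hw_conj]
  simp only [conj, hcoeff, ofReal_one, one_mul]

lemma wirtinger₃_imSlice_anti_hol_hol_of_pos_pos_neg (hs : 0 < lam s)
    (hj : 0 < lam j) (ht : lam t < 0) :
    wirtinger₃ (anti s) (hol j) (hol t) (cplx (imSlice Ψ)) =
      (|lam s| / (|lam s| + |lam t|) : ℝ) *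
        wirtinger₃ (anti s) (hol j) (hol t) (cplx φ) := by
  have ht_ne := ht.ne
  have hw : weight lam (anti s) + weight lam (hol j) + weight lam (hol t) ≠ 0 := by
    rw [weight_anti_of_pos hs, weight_hol_of_pos hj, weight_hol_of_neg ht]
    positivity
  have hw_conj : weight lam (hol s) + weight lam (anti j) + weight lam (anti t) ≠ 0 := by
    rw [weight_hol_of_pos hs, weight_anti_of_pos hj, weight_anti_of_neg ht]
    positivity
  have hcoeff : (meanSign lam [anti s, hol j, hol t] +
      meanSign lam [hol s, anti j, anti t]) / 2 = |lam s| / (|lam s| + |lam t|) := by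
    simp only [meanSign_triple, sign,
      weight_anti_of_pos hs, weight_hol_of_pos hj, weight_hol_of_neg ht,
      weight_hol_of_pos hs, weight_anti_of_pos hj, weight_anti_of_neg ht]
    field_simp
    ring
  rw [h.wirtinger₃_imSlice_eq_of_weight_ne_zero hw hw_conj]
  simp only [conj, hcoeff]

lemma wirtinger₃_imSlice_anti_hol_hol_of_pos_neg_neg (hs : 0 < lam s)
    (hj : lam j < 0) (ht : lam t < 0) :
    wirtinger₃ (anti s) (hol j) (hol t) (cplx (imSlice Ψ)) =
      (1 / (|lam j| + |lam t| + |lam s|) * (|lam s| - |lam j| * |lam t| / (|lam j| + |lam s|) -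
        |lam j| * |lam t| / (|lam s| + |lam t|)) : ℝ) *
        wirtinger₃ (anti s) (hol j) (hol t) (cplx φ) := by
  have hj_ne := hj.ne
  have ht_ne := ht.ne
  have hcoeff : (meanSign lam [anti s, hol j] + meanSign lam [anti s, hol t] +
      meanSign lam [hol j, hol t] - ((anti s).sign + (hol j).sign + (hol t).sign)) / 2 =
      1 / (|lam j| + |lam t| + |lam s|) * (|lam s| - |lam j| * |lam t| / (|lam j| + |lam s|) -
        |lam j| * |lam t| / (|lam s| + |lam t|)) := by
    simp only [meanSign_pair, sign,
      weight_anti_of_pos hs, weight_hol_of_neg hj, weight_hol_of_neg ht]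
    field_simp
    ring
  rw [← hcoeff]
  apply h.wirtinger₃_imSlice_eq_of_pair_weight_ne_zero <;>
    simp only [weight_anti_of_pos hs, weight_hol_of_neg hj, weight_hol_of_neg ht] <;>
    positivity

lemma wirtinger₃_imSlice_anti_hol_hol_of_neg_neg_neg (hs : lam s < 0)
    (hj : lam j < 0) (ht : lam t < 0) :
    wirtinger₃ (anti s) (hol j) (hol t) (cplx (imSlice Ψ)) =
      -wirtinger₃ (anti s) (hol j) (hol t) (cplx φ) := by
  have hs_ne := hs.ne
  have hj_ne := hj.ne
  have ht_ne := ht.ne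
  have hw : weight lam (anti s) + weight lam (hol j) + weight lam (hol t) ≠ 0 := by
    rw [weight_anti_of_neg hs, weight_hol_of_neg hj, weight_hol_of_neg ht]
    positivity
  have hw_conj : weight lam (hol s) + weight lam (anti j) + weight lam (anti t) ≠ 0 := by
    rw [weight_hol_of_neg hs, weight_anti_of_neg hj, weight_anti_of_neg ht]
    positivity
  have hcoeff : (meanSign lam [anti s, hol j, hol t] +
      meanSign lam [hol s, anti j, anti t]) / 2 = -1 := by
    simp only [meanSign_triple, sign,
      weight_anti_of_neg hs, weight_hol_of_neg hj, weight_hol_of_neg ht,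
      weight_hol_of_neg hs, weight_anti_of_neg hj, weight_anti_of_neg ht]
    field_simp
    ring
  rw [h.wirtinger₃_imSlice_eq_of_weight_ne_zero hw hw_conj]
  simp only [conj, hcoeff, ofReal_neg, ofReal_one, neg_one_mul]

lemma wirtinger₃_imSlice_anti_hol_hol_of_neg_pos_neg (hs : lam s < 0)
    (hj : 0 < lam j) (ht : lam t < 0) :
    wirtinger₃ (anti s) (hol j) (hol t) (cplx (imSlice Ψ)) =
      -(|lam s| / (|lam j| + |lam s|) : ℝ) *
        wirtinger₃ (anti s) (hol j) (hol t) (cplx φ) := by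
  have hs_ne := hs.ne
  have ht_ne := ht.ne
  have hw : weight lam (anti s) + weight lam (hol j) + weight lam (hol t) ≠ 0 := by
    rw [weight_anti_of_neg hs, weight_hol_of_pos hj, weight_hol_of_neg ht]
    positivity
  have hw_conj : weight lam (hol s) + weight lam (anti j) + weight lam (anti t) ≠ 0 := by
    rw [weight_hol_of_neg hs, weight_anti_of_pos hj, weight_anti_of_neg ht]
    positivity
  have hcoeff : (meanSign lam [anti s, hol j, hol t] +
      meanSign lam [hol s, anti j, anti t]) / 2 = -(|lam s| / (|lam j| + |lam s|)) := by
    simp only [meanSign_triple, sign,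
      weight_anti_of_neg hs, weight_hol_of_pos hj, weight_hol_of_neg ht,
      weight_hol_of_neg hs, weight_anti_of_pos hj, weight_anti_of_neg ht]
    field_simp
    ring
  rw [h.wirtinger₃_imSlice_eq_of_weight_ne_zero hw hw_conj]
  simp only [conj, hcoeff, ofReal_neg]

lemma wirtinger₃_imSlice_anti_hol_hol_of_neg_pos_pos (hs : lam s < 0)
    (hj : 0 < lam j) (ht : 0 < lam t) :
    wirtinger₃ (anti s) (hol j) (hol t) (cplx (imSlice Ψ)) =
      (1 / (|lam j| + |lam t| + |lam s|) * (-|lam s| + |lam t| * |lam j| / (|lam j| + |lam s|) +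
        |lam t| * |lam j| / (|lam s| + |lam t|)) : ℝ) *
        wirtinger₃ (anti s) (hol j) (hol t) (cplx φ) := by
  have hs_ne := hs.ne
  have hcoeff : (meanSign lam [hol s, anti j] + meanSign lam [hol s, anti t] +
      meanSign lam [anti j, anti t] - ((hol s).sign + (anti j).sign + (anti t).sign)) / 2 =
      1 / (|lam j| + |lam t| + |lam s|) * (-|lam s| + |lam t| * |lam j| / (|lam j| + |lam s|) +
        |lam t| * |lam j| / (|lam s| + |lam t|)) := by
    simp only [meanSign_pair, sign,
      weight_hol_of_neg hs, weight_anti_of_pos hj, weight_anti_of_pos ht]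
    field_simp
    ring
  rw [← hcoeff]
  apply wirtinger₃_cplx_eq_mul_of_conj
  apply h.wirtinger₃_imSlice_eq_of_pair_weight_ne_zero <;>
    simp only [conj, weight_hol_of_neg hs, weight_anti_of_pos hj, weight_anti_of_pos ht] <;>
    positivity

end MixedType

end IsEikonalPhase

lemma wdb_wd_wd_eq_wirtinger₃ (s j t : Fin n) (f : Cn n → ℂ) :
    wdb s (wd j (wd t f)) 0 = wirtinger₃ (anti s) (hol j) (hol t) f := by
  simp only [wd_eq_cxDeriv, wdb_eq_cxDeriv, wirtinger₃, cxDeriv₃]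

lemma wd_wd_wd_eq_wirtinger₃ (s j t : Fin n) (f : Cn n → ℂ) :
    wd s (wd j (wd t f)) 0 = wirtinger₃ (hol s) (hol j) (hol t) f := by
  simp only [wd_eq_cxDeriv, wirtinger₃, cxDeriv₃]

end EikonalPhase

theorem statement11_general {n : ℕ} {lam : Fin n → ℝ} {φ : Cn n → ℝ} {Ψ : Cn n × Cn n → ℂ}
    (h : IsEikonalPhase lam φ Ψ) :
    let u : Cn n → ℂ := fun z => ((Ψ (z, 0)).im : ℂ)
    (∀ j t s : Fin n, 0 < lam j → 0 < lam t → 0 < lam s →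
      wdb s (wd j (wd t u)) 0 = wdb s (wd j (wd t (cplx φ))) 0) ∧
    (∀ j t s : Fin n, 0 < lam j → lam t < 0 → 0 < lam s →
      wdb s (wd j (wd t u)) 0 =
        ((|lam s| / (|lam s| + |lam t|) : ℝ) : ℂ) * wdb s (wd j (wd t (cplx φ))) 0) ∧
    (∀ j t s : Fin n, lam j < 0 → lam t < 0 → 0 < lam s →
      wdb s (wd j (wd t u)) 0 =
        ((1 / (|lam j| + |lam t| + |lam s|) *
            (|lam s| - |lam j| * |lam t| / (|lam j| + |lam s|)
                     - |lam j| * |lam t| / (|lam s| + |lam t|)) : ℝ) : ℂ) *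
          wdb s (wd j (wd t (cplx φ))) 0) ∧
    (∀ j t s : Fin n, lam j < 0 → lam t < 0 → lam s < 0 →
      wdb s (wd j (wd t u)) 0 = - wdb s (wd j (wd t (cplx φ))) 0) ∧
    (∀ j t s : Fin n, 0 < lam j → lam t < 0 → lam s < 0 →
      wdb s (wd j (wd t u)) 0 =
        - ((|lam s| / (|lam j| + |lam s|) : ℝ) : ℂ) * wdb s (wd j (wd t (cplx φ))) 0) ∧
    (∀ j t s : Fin n, 0 < lam j → 0 < lam t → lam s < 0 →
      wdb s (wd j (wd t u)) 0 =
        ((1 / (|lam j| + |lam t| + |lam s|) *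
            (- |lam s| + |lam t| * |lam j| / (|lam j| + |lam s|)
                       + |lam t| * |lam j| / (|lam s| + |lam t|)) : ℝ) : ℂ) *
          wdb s (wd j (wd t (cplx φ))) 0) ∧
    (∀ s j t : Fin n, lam s ≠ 0 → lam j ≠ 0 → lam t ≠ 0 → wd s (wd j (wd t u)) 0 = 0) := by
  simp only [wdb_wd_wd_eq_wirtinger₃, wd_wd_wd_eq_wirtinger₃]
  exact
    ⟨fun _ _ _ hj ht hs => h.wirtinger₃_imSlice_anti_hol_hol_of_pos_pos_pos hs hj ht,
      fun _ _ _ hj ht hs => h.wirtinger₃_imSlice_anti_hol_hol_of_pos_pos_neg hs hj ht,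
      fun _ _ _ hj ht hs => h.wirtinger₃_imSlice_anti_hol_hol_of_pos_neg_neg hs hj ht,
      fun _ _ _ hj ht hs => h.wirtinger₃_imSlice_anti_hol_hol_of_neg_neg_neg hs hj ht,
      fun _ _ _ hj ht hs => h.wirtinger₃_imSlice_anti_hol_hol_of_neg_pos_neg hs hj ht,
      fun _ _ _ hj ht hs => h.wirtinger₃_imSlice_anti_hol_hol_of_neg_pos_pos hs hj ht,
      fun _ _ _ hs hj ht => h.wirtinger₃_imSlice_eq_zero_of_sign_eq hs hj ht rfl rfl⟩

/-- the third Wirtinger derivatives of `u(z) := Im ψ(z,0)` at `0`. -/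
theorem statement11 (n q : ℕ) (hn : 1 ≤ n) (hq : q ≤ n) (lam : Fin n → ℝ)
    (hneg : ∀ j : Fin n, (j : ℕ) < q → lam j < 0)
    (hpos : ∀ j : Fin n, q ≤ (j : ℕ) → 0 < lam j)
    (φ : Cn n → ℝ) (hφ : PhiOK lam φ)
    (ψ : Cn n → Cn n → ℂ) (hψ : Admissible lam φ ψ) :
    -- u := Im ψ(·,0), regarded as a complex-valued function for Wirtinger calculus
    let u : Cn n → ℂ := fun z => ((ψ z 0).im : ℂ)
    (∀ j t s : Fin n, q ≤ (j : ℕ) → q ≤ (t : ℕ) → q ≤ (s : ℕ) →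
      wdb s (wd j (wd t u)) 0 = wdb s (wd j (wd t (cplx φ))) 0) ∧
    (∀ j t s : Fin n, q ≤ (j : ℕ) → (t : ℕ) < q → q ≤ (s : ℕ) →
      wdb s (wd j (wd t u)) 0 =
        ((|lam s| / (|lam s| + |lam t|) : ℝ) : ℂ) * wdb s (wd j (wd t (cplx φ))) 0) ∧
    (∀ j t s : Fin n, (j : ℕ) < q → (t : ℕ) < q → q ≤ (s : ℕ) →
      wdb s (wd j (wd t u)) 0 =
        ((1 / (|lam j| + |lam t| + |lam s|) *
            (|lam s| - |lam j| * |lam t| / (|lam j| + |lam s|)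
                     - |lam j| * |lam t| / (|lam s| + |lam t|)) : ℝ) : ℂ) *
          wdb s (wd j (wd t (cplx φ))) 0) ∧
    (∀ j t s : Fin n, (j : ℕ) < q → (t : ℕ) < q → (s : ℕ) < q →
      wdb s (wd j (wd t u)) 0 = - wdb s (wd j (wd t (cplx φ))) 0) ∧
    (∀ j t s : Fin n, q ≤ (j : ℕ) → (t : ℕ) < q → (s : ℕ) < q →
      wdb s (wd j (wd t u)) 0 =
        - ((|lam s| / (|lam j| + |lam s|) : ℝ) : ℂ) * wdb s (wd j (wd t (cplx φ))) 0) ∧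
    (∀ j t s : Fin n, q ≤ (j : ℕ) → q ≤ (t : ℕ) → (s : ℕ) < q →
      wdb s (wd j (wd t u)) 0 =
        ((1 / (|lam j| + |lam t| + |lam s|) *
            (- |lam s| + |lam t| * |lam j| / (|lam j| + |lam s|)
                       + |lam t| * |lam j| / (|lam s| + |lam t|)) : ℝ) : ℂ) *
          wdb s (wd j (wd t (cplx φ))) 0) ∧
    (∀ s j t : Fin n, wd s (wd j (wd t u)) 0 = 0) := by
  have hneg_iff (j : Fin n) : (j : ℕ) < q ↔ lam j < 0 :=
    ⟨hneg j, fun hj => not_le.1 fun hqj => (hpos j hqj).not_gt hj⟩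
  have hpos_iff (j : Fin n) : q ≤ (j : ℕ) ↔ 0 < lam j :=
    ⟨hpos j, fun hj => not_lt.1 fun hjq => (hneg j hjq).not_gt hj⟩
  have hlam (j : Fin n) : lam j ≠ 0 :=
    (lt_or_ge (j : ℕ) q).elim (fun hj => (hneg j hj).ne) fun hj => (hpos j hj).ne'
  simpa only [hneg_iff, hpos_iff, hlam, ne_eq, not_false_eq_true, true_imp_iff] using
    statement11_general (isEikonalPhase_of_admissible hφ hψ)
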